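/- Let d ≥ 2 and n = d + 2, and let y and y₁ be two linearly independent solutions of the Schrödinger equation with parameters (α, λ). Let f = y/y₁ (with the convention that f takes an arbitrary value at the isolated zeros of y₁). Then for every j ∈ {0,…,n−1} the function f has an asymptotic value in the Stokes sector S_j: either there exists w ∈ ℂ such that f(r·e^{iθ}) → w as r → +∞ for every θ with |θ − 2πj/n| < π/n, or |f(r·e^{iθ})| → +∞ as r → +∞ for every such θ. -/

import Mathlib

open Complex Filter Topology

/-- The polynomial potential `P_α(z) = z^d + α_{d-1} z^{d-1} + ⋯ + α₁ z`. -/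
noncomputable def Pol (d : ℕ) (α : Fin (d - 1) → ℂ) (z : ℂ) : ℂ :=
  z ^ d + ∑ i : Fin (d - 1), α i * z ^ ((i : ℕ) + 1)

/-- `y` is an (entire) solution of the Schrödinger equation `y'' = (P_α - λ) y`. -/
def IsSol (d : ℕ) (α : Fin (d - 1) → ℂ) (lam : ℂ) (y : ℂ → ℂ) : Prop :=
  Differentiable ℂ y ∧ ∀ z : ℂ, deriv (deriv y) z = (Pol d α z - lam) * y z

/-- `θ` is a ray direction of the Stokes sector `S_j`. -/
def DirIn (n j : ℕ) (θ : ℝ) : Prop :=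
  |θ - 2 * Real.pi * j / n| < Real.pi / n

/-- `y` is subdominant in the Stokes sector `S_j`: it tends to `0` along every ray in `S_j`. -/
def Subdominant (n j : ℕ) (y : ℂ → ℂ) : Prop :=
  ∀ θ : ℝ, DirIn n j θ →
    Tendsto (fun r : ℝ => y ((r : ℂ) * Complex.exp (θ * Complex.I))) atTop (𝓝 0)

/-- The branch `z ^ (d / 2)` of the square root of `z ^ d` on the slit plane. -/
noncomputable def wkbRoot (d : ℕ) (z : ℂ) : ℂ := Complex.exp (((d / 2 : ℝ) : ℂ) * Complex.log z)

/-- The component of a solution along the growing WKB mode. -/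
noncomputable def growPart (d : ℕ) (y : ℂ → ℂ) (z : ℂ) : ℂ := deriv y z + wkbRoot d z * y z

/-- The component of a solution along the decaying WKB mode. -/
noncomputable def decayPart (d : ℕ) (y : ℂ → ℂ) (z : ℂ) : ℂ := deriv y z - wkbRoot d z * y z

/-- The quadratic form which is positive where the growing mode dominates. -/
noncomputable def dominance (d : ℕ) (K : ℝ) (y : ℂ → ℂ) (z : ℂ) : ℝ :=
  ‖growPart d y z‖ ^ 2 - K * ‖decayPart d y z‖ ^ 2

/-- `y` is an entire solution of `y'' = Q y`. -/
def IsEntireSol (Q y : ℂ → ℂ) : Prop :=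
  Differentiable ℂ y ∧ ∀ z : ℂ, deriv (deriv y) z = Q z * y z

/-- `y` is recessive along the ray in direction `θ`. -/
def RecessiveAlong (d : ℕ) (y : ℂ → ℂ) (θ : ℝ) : Prop :=
  ∀ᶠ r : ℝ in atTop, dominance d (1 / 4) y (r * Complex.exp (θ * Complex.I)) ≤ 0

/-- The region and direction in which the WKB modes of `y'' = Q y` are well separated. -/
def ModesSeparated (d : ℕ) (Q : ℂ → ℂ) (z e : ℂ) : Prop :=
  z ∈ slitPlane ∧ 1 ≤ (e * wkbRoot d z).re ∧
    ‖Q z - wkbRoot d z ^ 2 + (d / 2 : ℝ) / z * wkbRoot d z‖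
      ≤ (e * wkbRoot d z).re / 7 * ‖2 * wkbRoot d z‖ ∧
    ‖Q z - wkbRoot d z ^ 2 - (d / 2 : ℝ) / z * wkbRoot d z‖
      ≤ (e * wkbRoot d z).re / 7 * ‖2 * wkbRoot d z‖

lemma wkbRoot_ne_zero (d : ℕ) (z : ℂ) : wkbRoot d z ≠ 0 := Complex.exp_ne_zero _

lemma hasDerivAt_wkbRoot (d : ℕ) {z : ℂ} (hz : z ∈ slitPlane) :
    HasDerivAt (wkbRoot d) ((d / 2 : ℝ) / z * wkbRoot d z) z := by
  have h := ((Complex.hasDerivAt_log hz).const_mul ((d / 2 : ℝ) : ℂ)).cexp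
  exact h.congr_deriv (by unfold wkbRoot; ring)

lemma wkbRoot_sq (d : ℕ) {z : ℂ} (hz : z ≠ 0) : wkbRoot d z ^ 2 = z ^ d := by
  unfold wkbRoot
  rw [← Complex.exp_nat_mul]
  conv_rhs => rw [← Complex.exp_log hz, ← Complex.exp_nat_mul]
  congr 1
  push_cast
  ring

lemma norm_wkbRoot (d : ℕ) (z : ℂ) : ‖wkbRoot d z‖ = Real.exp (d / 2 * Real.log ‖z‖) := by
  unfold wkbRoot
  rw [Complex.norm_exp, Complex.re_ofReal_mul, Complex.log_re]

lemma re_exp_mul_wkbRoot (d : ℕ) (z : ℂ) (ψ : ℝ) :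
    (Complex.exp (ψ * Complex.I) * wkbRoot d z).re
      = ‖wkbRoot d z‖ * Real.cos (ψ + d / 2 * z.arg) := by
  rw [norm_wkbRoot]
  unfold wkbRoot
  rw [← Complex.exp_add, Complex.exp_re]
  simp [Complex.log_re, Complex.log_im]

lemma le_norm_wkbRoot {d : ℕ} (hd : 2 ≤ d) {z : ℂ} (hz : 1 ≤ ‖z‖) : ‖z‖ ≤ ‖wkbRoot d z‖ := by
  rw [norm_wkbRoot]
  have h0 : 0 < ‖z‖ := by linarith
  have h1 := Real.log_nonneg hz
  have h2 : (2 : ℝ) ≤ d := by exact_mod_cast hd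
  calc ‖z‖ = Real.exp (Real.log ‖z‖) := (Real.exp_log h0).symm
    _ ≤ _ := Real.exp_le_exp.2 (by nlinarith)

lemma exists_modesSeparated {d : ℕ} (hd : 2 ≤ d) {Q : ℂ → ℂ}
    (hQ : Tendsto (fun z => Q z / z ^ d) (cocompact ℂ) (𝓝 1)) {β : ℝ}
    (hβ' : β < Real.pi / (d + 2)) :
    ∃ R : ℝ, 0 < R ∧ ∀ z : ℂ, R ≤ ‖z‖ → |z.arg| ≤ β → ∀ ψ : ℝ, |ψ| ≤ β →
      ModesSeparated d Q z (Complex.exp (ψ * Complex.I)) := by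
  rcases lt_or_ge β 0 with hneg | hβ
  · exact ⟨1, one_pos, fun z _ h => absurd (abs_nonneg z.arg) (by linarith)⟩
  have hd2 : (2 : ℝ) ≤ d := by exact_mod_cast hd
  have hpi := Real.pi_pos
  have hβ2 : β * (d + 2) < Real.pi := by rwa [lt_div_iff₀ (by linarith)] at hβ'
  set c := Real.cos ((1 + d / 2) * β) with hc
  have hcpos : 0 < c := Real.cos_pos_of_mem_Ioo ⟨by nlinarith, by nlinarith⟩
  have hnear : ∀ᶠ z in cocompact ℂ, ‖Q z / z ^ d - 1‖ < c / 7 := by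
    have := (Metric.tendsto_nhds.1 hQ) (c / 7) (by positivity)
    simpa [dist_eq_norm] using this
  rw [← Metric.cobounded_eq_cocompact, ← comap_norm_atTop, Filter.eventually_comap,
    Filter.eventually_atTop] at hnear
  obtain ⟨R₀, hR₀⟩ := hnear
  refine ⟨max (max R₀ 1) (max (1 / c) (7 * d / c)), by positivity, fun z hz harg ψ hψ => ?_⟩
  have hz0 : R₀ ≤ ‖z‖ := le_trans (by simp) hz
  have hz1 : 1 ≤ ‖z‖ := le_trans (by simp) hz
  have hz2 : 1 / c ≤ ‖z‖ := le_trans (by simp) hz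
  have hz3 : 7 * d / c ≤ ‖z‖ := le_trans (by simp) hz
  have hzpos : 0 < ‖z‖ := by linarith
  have hne : z ≠ 0 := norm_pos_iff.1 hzpos
  set S := ‖wkbRoot d z‖ with hS
  have hSz : ‖z‖ ≤ S := le_norm_wkbRoot hd hz1
  have hS1 : 1 ≤ S := hz1.trans hSz
  have hcos : c ≤ Real.cos (ψ + d / 2 * z.arg) := by
    rw [hc, ← Real.cos_abs (ψ + _)]
    apply Real.cos_le_cos_of_nonneg_of_le_pi (abs_nonneg _) (by nlinarith)
    refine (abs_add_le _ _).trans ?_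
    rw [abs_mul, abs_of_nonneg (by positivity : (0 : ℝ) ≤ d / 2)]
    nlinarith
  have hσ : S * c ≤ (Complex.exp (ψ * Complex.I) * wkbRoot d z).re := by
    rw [re_exp_mul_wkbRoot]
    gcongr
  have hmain : ‖Q z - wkbRoot d z ^ 2‖ ≤ S * (c / 7) * S := by
    have h1 : Q z - wkbRoot d z ^ 2 = (Q z / z ^ d - 1) * wkbRoot d z ^ 2 := by
      rw [wkbRoot_sq d hne]
      field_simp
    rw [h1, norm_mul, norm_pow]
    have := (hR₀ _ hz0 z rfl).le
    nlinarith [sq_nonneg S]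
  have hder : ‖((d / 2 : ℝ) : ℂ) / z * wkbRoot d z‖ ≤ S * (c / 7) * S := by
    rw [norm_mul, norm_div, Complex.norm_real, Real.norm_of_nonneg (by positivity)]
    have h1 : (d : ℝ) / 2 / ‖z‖ ≤ c / 7 := by
      rw [div_le_iff₀ hzpos]
      rw [div_le_iff₀ hcpos] at hz3
      nlinarith
    have : (d : ℝ) / 2 / ‖z‖ ≤ S * (c / 7) := h1.trans (by nlinarith)
    gcongr
  have hbd : S * (c / 7) * S + S * (c / 7) * S
      ≤ (Complex.exp (ψ * Complex.I) * wkbRoot d z).re / 7 * ‖2 * wkbRoot d z‖ := by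
    rw [norm_mul, ← hS]
    simp only [Complex.norm_ofNat]
    nlinarith
  refine ⟨?_, ?_, ?_, ?_⟩
  · rw [mem_slitPlane_iff_arg]
    refine ⟨fun h => ?_, hne⟩
    rw [h, abs_of_pos hpi] at harg
    nlinarith
  · rw [div_le_iff₀ hcpos] at hz2
    nlinarith
  · exact (norm_add_le _ _).trans ((add_le_add hmain hder).trans hbd)
  · exact (norm_sub_le _ _).trans ((add_le_add hmain hder).trans hbd)

lemma dominance_form_bound {K σ a b : ℝ} (hK : K = 1 / 4 ∨ K = 4) (hσ : 1 ≤ σ) :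
    a ^ 2 + K * b ^ 2 ≤
      2 * (σ * a ^ 2 - σ / 7 * (a * (a + b))) + K * (2 * (σ * b ^ 2 - σ / 7 * (b * (a + b)))) := by
  have h : 0 ≤ a ^ 2 + K * b ^ 2 := by rcases hK with rfl | rfl <;> positivity
  have h2 : σ * (a ^ 2 + K * b ^ 2) ≤
      σ * (2 * (a ^ 2 - 1 / 7 * (a * (a + b))) + K * (2 * (b ^ 2 - 1 / 7 * (b * (a + b))))) := by
    apply mul_le_mul_of_nonneg_left _ (by linarith)
    rcases hK with rfl | rfl
    · nlinarith [sq_nonneg (a - b / 2), sq_nonneg a, sq_nonneg b, sq_nonneg (a - b)]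
    · nlinarith [sq_nonneg (a - 2 * b), sq_nonneg a, sq_nonneg b, sq_nonneg (a - b)]
  nlinarith

lemma IsEntireSol.differentiable_deriv {Q y : ℂ → ℂ} (hy : IsEntireSol Q y) :
    Differentiable ℂ (deriv y) :=
  (hy.1.contDiff (n := 2)).differentiable_deriv_two

lemma IsEntireSol.hasDerivAt_deriv {Q y : ℂ → ℂ} (hy : IsEntireSol Q y) (z : ℂ) :
    HasDerivAt (deriv y) (Q z * y z) z := by
  rw [← hy.2 z]
  exact (hy.differentiable_deriv z).hasDerivAt

lemma hasDerivAt_dominance {d : ℕ} {Q y : ℂ → ℂ} (hy : IsEntireSol Q y) {a e : ℂ} {t : ℝ}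
    (he : ‖e‖ = 1) (hsep : ModesSeparated d Q (a + t * e) e) {K : ℝ} (hK : K = 1 / 4 ∨ K = 4) :
    ∃ D' : ℝ, HasDerivAt (fun t : ℝ => dominance d K y (a + t * e)) D' t ∧
      ‖growPart d y (a + t * e)‖ ^ 2 + K * ‖decayPart d y (a + t * e)‖ ^ 2 ≤ D' := by
  obtain ⟨hslit, hσ, hp, hm⟩ := hsep
  have hpath : HasDerivAt (fun t : ℝ => a + (t : ℂ) * e) e t := by
    simpa using ((Complex.ofRealCLM.hasDerivAt (x := t)).mul_const e).const_add a
  set z := a + (t : ℂ) * e with hz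
  have hdy : HasDerivAt y (deriv y z) z := (hy.1 z).hasDerivAt
  have hddy := hy.hasDerivAt_deriv z
  have hs := hasDerivAt_wkbRoot d hslit
  have hA : HasDerivAt (growPart d y) _ z := hddy.add (hs.mul hdy)
  have hB : HasDerivAt (decayPart d y) _ z := hddy.sub (hs.mul hdy)
  have hA' := (HasDerivAt.comp t hA hpath).norm_sq
  have hB' := (HasDerivAt.comp t hB hpath).norm_sq
  refine ⟨_, hA'.sub (hB'.const_mul K), ?_⟩
  set s := wkbRoot d z with hsdef
  set s' := ((d / 2 : ℝ) : ℂ) / z * s with hs'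
  set A := growPart d y z with hAdef
  set B := decayPart d y z with hBdef
  set σ := (e * s).re with hσdef
  have hAB : A - B = 2 * s * y z := by
    rw [hAdef, hBdef, growPart, decayPart]; ring
  have hκ : ∀ N : ℂ, ‖N‖ ≤ σ / 7 * ‖2 * s‖ → ‖e * (N * y z)‖ ≤ σ / 7 * (‖A‖ + ‖B‖) := by
    intro N hN
    have h1 : ‖A - B‖ ≤ ‖A‖ + ‖B‖ := norm_sub_le _ _
    rw [hAB, norm_mul] at h1
    rw [norm_mul, he, one_mul, norm_mul]
    calc ‖N‖ * ‖y z‖ ≤ σ / 7 * ‖2 * s‖ * ‖y z‖ := by gcongr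
      _ = σ / 7 * (‖2 * s‖ * ‖y z‖) := by ring
      _ ≤ _ := by gcongr
  have hre : ∀ X Y : ℂ, |(Y * (starRingEnd ℂ) X).re| ≤ ‖X‖ * ‖Y‖ := by
    intro X Y
    refine (Complex.abs_re_le_norm _).trans ?_
    rw [norm_mul, Complex.norm_conj, mul_comm]
  have hsq : ∀ X : ℂ, (e * s * X * (starRingEnd ℂ) X).re = σ * ‖X‖ ^ 2 := by
    intro X
    have : e * s * X * (starRingEnd ℂ) X = (e * s) * ((‖X‖ ^ 2 : ℝ) : ℂ) := by
      rw [← Complex.normSq_eq_norm_sq, ← Complex.mul_conj]; ring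
    rw [this, Complex.re_mul_ofReal]
  have e1 : (Q z * y z + (s' * y z + s * deriv y z)) * e
      = e * s * A + e * ((Q z - s ^ 2 + s') * y z) := by
    rw [hAdef, growPart]; ring
  have e2 : (Q z * y z - (s' * y z + s * deriv y z)) * e
      = -(e * s * B) + e * ((Q z - s ^ 2 - s') * y z) := by
    rw [hBdef, decayPart]; ring
  have i1 : σ * ‖A‖ ^ 2 - σ / 7 * (‖A‖ * (‖A‖ + ‖B‖)) ≤
      inner ℝ A ((Q z * y z + (s' * y z + s * deriv y z)) * e) := by
    rw [Complex.inner, e1, add_mul, Complex.add_re, hsq]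
    have h1 := (abs_le.1 (hre A (e * ((Q z - s ^ 2 + s') * y z)))).1
    have h2 := mul_le_mul_of_nonneg_left (hκ _ hp) (norm_nonneg A)
    linarith
  have i2 : σ * ‖B‖ ^ 2 - σ / 7 * (‖B‖ * (‖A‖ + ‖B‖)) ≤
      - inner ℝ B ((Q z * y z - (s' * y z + s * deriv y z)) * e) := by
    rw [Complex.inner, e2, add_mul, Complex.add_re, neg_mul, Complex.neg_re, hsq]
    have h1 := (abs_le.1 (hre B (e * ((Q z - s ^ 2 - s') * y z)))).2
    have h2 := mul_le_mul_of_nonneg_left (hκ _ hm) (norm_nonneg B)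
    linarith
  have hform := dominance_form_bound (a := ‖A‖) (b := ‖B‖) hK hσ
  have hK0 : 0 ≤ K := by rcases hK with rfl | rfl <;> norm_num
  have i3 := mul_le_mul_of_nonneg_left i2 hK0
  simp only [Function.comp_apply]
  linarith

lemma le_of_hasDerivAt_nonneg {g : ℝ → ℝ} {t₁ t₂ : ℝ} (h : t₁ ≤ t₂)
    (hg : ∀ t ∈ Set.Icc t₁ t₂, ∃ D' : ℝ, HasDerivAt g D' t ∧ 0 ≤ D') : g t₁ ≤ g t₂ := by
  refine monotoneOn_of_deriv_nonneg (convex_Icc t₁ t₂)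
    (fun t ht => ?_) (fun t ht => ?_) (fun t ht => ?_)
    (Set.left_mem_Icc.2 h) (Set.right_mem_Icc.2 h) h
  · obtain ⟨D', hD, -⟩ := hg t ht
    exact hD.continuousAt.continuousWithinAt
  · obtain ⟨D', hD, -⟩ := hg t (interior_subset ht)
    exact hD.differentiableAt.differentiableWithinAt
  · obtain ⟨D', hD, h0⟩ := hg t (interior_subset ht)
    rwa [hD.deriv]

lemma dominance_le_dominance {d : ℕ} {Q y : ℂ → ℂ} (hy : IsEntireSol Q y) {a e : ℂ}
    (he : ‖e‖ = 1) {t₁ t₂ : ℝ} (h : t₁ ≤ t₂)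
    (hsep : ∀ t ∈ Set.Icc t₁ t₂, ModesSeparated d Q (a + (t : ℝ) * e) e) :
    dominance d (1 / 4) y (a + t₁ * e) ≤ dominance d (1 / 4) y (a + t₂ * e) := by
  refine le_of_hasDerivAt_nonneg (g := fun t : ℝ => dominance d (1 / 4) y (a + t * e)) h
    fun t ht => ?_
  obtain ⟨D', hD, h0⟩ := hasDerivAt_dominance hy he (hsep t ht) (Or.inl rfl)
  exact ⟨D', hD, le_trans (by positivity) h0⟩

/-- A differential inequality for the sizes `a`, `b` of two modes: each of the forms
`a ^ 2 - K * b ^ 2`, with `K = 1 / 4` or `K = 4`, grows at rate at least `a ^ 2 + K * b ^ 2`. -/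
def ModesDiverge (a b : ℝ → ℝ) (R : ℝ) : Prop :=
  ∀ K : ℝ, K = 1 / 4 ∨ K = 4 → ∀ t, R ≤ t →
    ∃ D' : ℝ, HasDerivAt (fun t => a t ^ 2 - K * b t ^ 2) D' t ∧ a t ^ 2 + K * b t ^ 2 ≤ D'

lemma ModesDiverge.mono {a b : ℝ → ℝ} {R : ℝ} (h : ModesDiverge a b R) {K : ℝ}
    (hK : K = 1 / 4 ∨ K = 4) {t₁ t₂ : ℝ} (h₁ : R ≤ t₁) (h₂ : t₁ ≤ t₂) :
    a t₁ ^ 2 - K * b t₁ ^ 2 ≤ a t₂ ^ 2 - K * b t₂ ^ 2 := by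
  refine le_of_hasDerivAt_nonneg (g := fun t => a t ^ 2 - K * b t ^ 2) h₂ fun t ht => ?_
  obtain ⟨D', hD, h0⟩ := h K hK t (h₁.trans ht.1)
  refine ⟨D', hD, le_trans ?_ h0⟩
  rcases hK with rfl | rfl <;> positivity

lemma ModesDiverge.grow_of_pos {a b : ℝ → ℝ} {R : ℝ} (h : ModesDiverge a b R)
    (ha : ∀ t, 0 ≤ a t) {t₀ : ℝ} (ht₀ : R ≤ t₀)
    (hpos : 0 < a t₀ ^ 2 - 1 / 4 * b t₀ ^ 2) :
    Tendsto a atTop atTop ∧ ∀ᶠ t in atTop, b t ≤ a t / 2 := by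
  set c := a t₀ ^ 2 - 1 / 4 * b t₀ ^ 2 with hc
  have hlow : ∀ t, t₀ ≤ t →
      (a t₀ ^ 2 - 4 * b t₀ ^ 2 - c * t₀) + c * t ≤ a t ^ 2 - 4 * b t ^ 2 := by
    intro t ht
    have := le_of_hasDerivAt_nonneg (g := fun t => (a t ^ 2 - 4 * b t ^ 2) - c * t) ht ?_
    · linarith
    intro τ hτ
    obtain ⟨D', hD, h0⟩ := h 4 (Or.inr rfl) τ (ht₀.trans hτ.1)
    refine ⟨_, hD.sub ((hasDerivAt_id τ).const_mul c), ?_⟩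
    have h1 := h.mono (Or.inl rfl) ht₀ hτ.1
    nlinarith [sq_nonneg (b τ)]
  have hlin : Tendsto (fun t => (a t₀ ^ 2 - 4 * b t₀ ^ 2 - c * t₀) + c * t) atTop atTop :=
    tendsto_atTop_add_const_left _ _ (tendsto_id.const_mul_atTop hpos)
  have hD : Tendsto (fun t => a t ^ 2 - 4 * b t ^ 2) atTop atTop :=
    tendsto_atTop_mono' _ ((eventually_ge_atTop t₀).mono hlow) hlin
  constructor
  · refine tendsto_atTop.2 fun M => ?_
    filter_upwards [hD.eventually_ge_atTop (M ^ 2)] with t ht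
    exact le_of_sq_le_sq (by nlinarith [sq_nonneg (b t)]) (ha t)
  · filter_upwards [hD.eventually_ge_atTop 0] with t ht
    nlinarith [ha t]

lemma ModesDiverge.tendsto_zero {a b : ℝ → ℝ} {R : ℝ} (h : ModesDiverge a b R)
    (hneg : ∀ t, R ≤ t → a t ^ 2 - 1 / 4 * b t ^ 2 ≤ 0) :
    Tendsto b atTop (𝓝 0) := by
  set C := Real.exp R * (4 * b R ^ 2 - a R ^ 2)
  have hup : ∀ t, R ≤ t → b t ^ 2 ≤ C * Real.exp (-t) := by
    intro t ht
    have h1 := le_of_hasDerivAt_nonneg (g := fun t => Real.exp t * (a t ^ 2 - 4 * b t ^ 2)) ht ?_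
    · have h2 := hneg t ht
      have h3 : Real.exp t * b t ^ 2 ≤ C := by
        have := mul_le_mul_of_nonneg_left
          (show b t ^ 2 ≤ -(a t ^ 2 - 4 * b t ^ 2) by nlinarith [sq_nonneg (b t)])
          (Real.exp_pos t).le
        simp only [C]
        nlinarith
      rw [Real.exp_neg, ← div_eq_mul_inv, le_div_iff₀ (Real.exp_pos t)]
      linarith
    intro τ hτ
    obtain ⟨D', hD, h0⟩ := h 4 (Or.inr rfl) τ hτ.1
    refine ⟨_, (Real.hasDerivAt_exp τ).mul hD, ?_⟩
    rw [← mul_add]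
    apply mul_nonneg (Real.exp_pos τ).le
    nlinarith [sq_nonneg (a τ)]
  have hz : Tendsto (fun t => b t ^ 2) atTop (𝓝 0) := by
    have hexp : Tendsto (fun t => C * Real.exp (-t)) atTop (𝓝 0) := by
      simpa using (Real.tendsto_exp_neg_atTop_nhds_zero).const_mul C
    exact squeeze_zero' (Eventually.of_forall fun t => sq_nonneg _)
      ((eventually_ge_atTop R).mono hup) hexp
  have := hz.sqrt
  simp only [Real.sqrt_sq_eq_abs, Real.sqrt_zero] at this
  exact (tendsto_zero_iff_abs_tendsto_zero _).2 this

/-- Along the ray in direction `θ` the modes are well separated beyond radius `R`. -/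
def RaySeparated (d : ℕ) (Q : ℂ → ℂ) (θ R : ℝ) : Prop :=
  ∀ r : ℝ, R ≤ r →
    ModesSeparated d Q (r * Complex.exp (θ * Complex.I)) (Complex.exp (θ * Complex.I))

lemma RaySeparated.modesDiverge {d : ℕ} {Q y : ℂ → ℂ} (hy : IsEntireSol Q y) {θ R : ℝ}
    (h : RaySeparated d Q θ R) :
    ModesDiverge (fun r => ‖growPart d y (r * Complex.exp (θ * Complex.I))‖)
      (fun r => ‖decayPart d y (r * Complex.exp (θ * Complex.I))‖) R := by
  intro K hK t ht
  have := hasDerivAt_dominance (a := 0) hy (Complex.norm_exp_ofReal_mul_I θ)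
    (by simpa using h t ht) hK
  simpa [dominance] using this

lemma RaySeparated.dominance_mono {d : ℕ} {Q y : ℂ → ℂ} (hy : IsEntireSol Q y) {θ R : ℝ}
    (h : RaySeparated d Q θ R) {r₁ r₂ : ℝ} (h₁ : R ≤ r₁) (h₂ : r₁ ≤ r₂) :
    dominance d (1 / 4) y (r₁ * Complex.exp (θ * Complex.I))
      ≤ dominance d (1 / 4) y (r₂ * Complex.exp (θ * Complex.I)) :=
  (h.modesDiverge hy).mono (Or.inl rfl) h₁ h₂

lemma RaySeparated.nonpos_of_recessive {d : ℕ} {Q y : ℂ → ℂ} (hy : IsEntireSol Q y) {θ R : ℝ}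
    (h : RaySeparated d Q θ R) (hrec : RecessiveAlong d y θ) {r : ℝ} (hr : R ≤ r) :
    dominance d (1 / 4) y (r * Complex.exp (θ * Complex.I)) ≤ 0 := by
  obtain ⟨r', h1, h2⟩ := (hrec.and (eventually_ge_atTop r)).exists
  exact (h.dominance_mono hy hr h2).trans h1

lemma RaySeparated.tendsto_decayPart {d : ℕ} {Q y : ℂ → ℂ} (hy : IsEntireSol Q y) {θ R : ℝ}
    (h : RaySeparated d Q θ R) (hrec : RecessiveAlong d y θ) :
    Tendsto (fun r : ℝ => ‖decayPart d y (r * Complex.exp (θ * Complex.I))‖) atTop (𝓝 0) :=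
  (h.modesDiverge hy).tendsto_zero fun _ ht => h.nonpos_of_recessive hy hrec ht

lemma RaySeparated.growPart_le {d : ℕ} {Q y : ℂ → ℂ} (hy : IsEntireSol Q y) {θ R : ℝ}
    (h : RaySeparated d Q θ R) (hrec : RecessiveAlong d y θ) {r : ℝ} (hr : R ≤ r) :
    ‖growPart d y (r * Complex.exp (θ * Complex.I))‖
      ≤ ‖decayPart d y (r * Complex.exp (θ * Complex.I))‖ / 2 := by
  have := h.nonpos_of_recessive hy hrec hr
  unfold dominance at this
  refine le_of_sq_le_sq ?_ (by positivity)
  nlinarith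

lemma RaySeparated.dominant {d : ℕ} {Q y : ℂ → ℂ} (hy : IsEntireSol Q y) {θ R : ℝ}
    (h : RaySeparated d Q θ R) (hrec : ¬ RecessiveAlong d y θ) :
    Tendsto (fun r : ℝ => ‖growPart d y (r * Complex.exp (θ * Complex.I))‖) atTop atTop ∧
    ∀ᶠ r : ℝ in atTop, ‖decayPart d y (r * Complex.exp (θ * Complex.I))‖
      ≤ ‖growPart d y (r * Complex.exp (θ * Complex.I))‖ / 2 := by
  unfold RecessiveAlong at hrec
  obtain ⟨r, h1, h2⟩ := ((not_eventually.1 hrec).and_eventually (eventually_ge_atTop R)).exists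
  exact (h.modesDiverge hy).grow_of_pos (fun _ => norm_nonneg _) h2 (not_le.1 h1)

/-- The Wronskian of two functions. -/
noncomputable def wronsk (u v : ℂ → ℂ) (z : ℂ) : ℂ := u z * deriv v z - deriv u z * v z

lemma wronsk_const {Q u v : ℂ → ℂ} (hu : IsEntireSol Q u) (hv : IsEntireSol Q v) (z w : ℂ) :
    wronsk u v z = wronsk u v w := by
  have h : ∀ z, HasDerivAt (wronsk u v) 0 z := fun z =>
    ((((hu.1 z).hasDerivAt).mul (hv.hasDerivAt_deriv z)).sub
      ((hu.hasDerivAt_deriv z).mul ((hv.1 z).hasDerivAt))).congr_deriv (by ring)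
  exact is_const_of_deriv_eq_zero (fun z => (h z).differentiableAt) (fun z => (h z).deriv) z w

lemma two_mul_wkbRoot_mul_wronsk (d : ℕ) (u v : ℂ → ℂ) (z : ℂ) :
    2 * wkbRoot d z * wronsk u v z
      = growPart d u z * decayPart d v z - decayPart d u z * growPart d v z := by
  unfold growPart decayPart wronsk
  ring

lemma two_mul_wkbRoot_mul (d : ℕ) (u : ℂ → ℂ) (z : ℂ) :
    2 * wkbRoot d z * u z = growPart d u z - decayPart d u z := by
  unfold growPart decayPart
  ring

lemma ModesSeparated.one_le_norm {d : ℕ} {Q : ℂ → ℂ} {z e : ℂ} (h : ModesSeparated d Q z e)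
    (he : ‖e‖ = 1) : 1 ≤ ‖wkbRoot d z‖ := by
  have := h.2.1.trans (Complex.re_le_norm _)
  rwa [norm_mul, he, one_mul] at this

/-- Recessive solutions along a ray are unique up to scaling. -/
lemma RaySeparated.not_recessive {d : ℕ} {Q u v : ℂ → ℂ} (hu : IsEntireSol Q u)
    (hv : IsEntireSol Q v) {θ R : ℝ} (h : RaySeparated d Q θ R)
    (hW : wronsk u v 0 ≠ 0) (hru : RecessiveAlong d u θ) : ¬ RecessiveAlong d v θ := by
  intro hrv
  have hlim := (h.tendsto_decayPart hu hru).mul (h.tendsto_decayPart hv hrv)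
  rw [mul_zero] at hlim
  have hW' : 0 < ‖wronsk u v 0‖ := norm_pos_iff.2 hW
  obtain ⟨r, h1, h2⟩ := ((hlim.eventually_lt_const hW').and (eventually_ge_atTop R)).exists
  have hsep := (h r h2).one_le_norm (Complex.norm_exp_ofReal_mul_I θ)
  have h3 := h.growPart_le hu hru h2
  have h4 := h.growPart_le hv hrv h2
  set z := (r : ℂ) * Complex.exp (θ * Complex.I)
  have h5 := norm_sub_le (growPart d u z * decayPart d v z) (decayPart d u z * growPart d v z)
  rw [← two_mul_wkbRoot_mul_wronsk, wronsk_const hu hv z 0] at h5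
  simp only [norm_mul, Complex.norm_ofNat] at h5
  have h6 := mul_le_mul_of_nonneg_right h3 (norm_nonneg (decayPart d v z))
  have h7 := mul_le_mul_of_nonneg_left h4 (norm_nonneg (decayPart d u z))
  nlinarith

lemma RaySeparated.tendsto_div {d : ℕ} {Q u v : ℂ → ℂ} (hu : IsEntireSol Q u)
    (hv : IsEntireSol Q v) {θ R : ℝ} (h : RaySeparated d Q θ R)
    (hru : RecessiveAlong d u θ) (hrv : ¬ RecessiveAlong d v θ) :
    (∀ᶠ r : ℝ in atTop, v (r * Complex.exp (θ * Complex.I)) ≠ 0) ∧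
    Tendsto (fun r : ℝ => u (r * Complex.exp (θ * Complex.I)) /
      v (r * Complex.exp (θ * Complex.I))) atTop (𝓝 0) := by
  obtain ⟨ha, hb⟩ := h.dominant hv hrv
  have key : ∀ᶠ r : ℝ in atTop, ‖growPart d v (r * Complex.exp (θ * Complex.I))‖ / 2
      ≤ ‖2 * wkbRoot d (r * Complex.exp (θ * Complex.I)) *
        v (r * Complex.exp (θ * Complex.I))‖ := by
    filter_upwards [hb] with r hr
    rw [two_mul_wkbRoot_mul]
    have := norm_sub_norm_le (growPart d v (r * Complex.exp (θ * Complex.I)))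
      (decayPart d v (r * Complex.exp (θ * Complex.I)))
    linarith
  refine ⟨?_, ?_⟩
  · filter_upwards [key, ha.eventually_gt_atTop 0] with r h1 h2 h3
    rw [h3, mul_zero, norm_zero] at h1
    linarith
  · have hlim : Tendsto (fun r : ℝ => 3 * ‖decayPart d u (r * Complex.exp (θ * Complex.I))‖
        / ‖growPart d v (r * Complex.exp (θ * Complex.I))‖) atTop (𝓝 0) :=
      (((h.tendsto_decayPart hu hru).const_mul 3)).div_atTop ha
    refine squeeze_zero_norm' ?_ hlim
    filter_upwards [key, ha.eventually_gt_atTop 0, eventually_ge_atTop R] with r h1 h2 h3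
    have h4 := h.growPart_le hu hru h3
    set z := (r : ℂ) * Complex.exp (θ * Complex.I)
    have h5 := norm_sub_le (growPart d u z) (decayPart d u z)
    rw [← two_mul_wkbRoot_mul] at h5
    have hs : 2 * wkbRoot d z ≠ 0 := mul_ne_zero two_ne_zero (wkbRoot_ne_zero d z)
    rw [← mul_div_mul_left _ _ hs, norm_div]
    calc _ ≤ (3 / 2 * ‖decayPart d u z‖) / (‖growPart d v z‖ / 2) := by
            apply div_le_div₀ (by positivity) (by linarith) (by positivity) h1
      _ = _ := by field_simp

lemma RaySeparated.ne_zero {d : ℕ} {Q u v : ℂ → ℂ} (hu : IsEntireSol Q u)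
    (hv : IsEntireSol Q v) {θ R : ℝ} (h : RaySeparated d Q θ R)
    (hW : wronsk u v 0 ≠ 0) (hru : RecessiveAlong d u θ) {r : ℝ} (hr : R ≤ r) :
    u (r * Complex.exp (θ * Complex.I)) ≠ 0 := by
  intro h0
  have h1 := h.growPart_le hu hru hr
  rw [← wronsk_const hu hv (r * Complex.exp (θ * Complex.I)) 0] at hW
  set z := (r : ℂ) * Complex.exp (θ * Complex.I)
  rw [growPart, decayPart, h0, mul_zero, add_zero, sub_zero] at h1
  have h2 : deriv u z = 0 := norm_le_zero_iff.1 (by linarith)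
  exact hW (by simp [wronsk, h0, h2])

lemma abs_lt_pi_div_two {d : ℕ} (hd : 2 ≤ d) {θ : ℝ} (hθ : |θ| < Real.pi / (d + 2)) :
    |θ| < Real.pi / 2 := by
  have hd2 : (2 : ℝ) ≤ d := by exact_mod_cast hd
  have hpi := Real.pi_pos
  refine hθ.trans_le ?_
  gcongr
  linarith

lemma arg_ray {ψ : ℝ} (hψ : |ψ| < Real.pi / 2) {r : ℝ} (hr : 0 < r) :
    ((r : ℂ) * Complex.exp (ψ * Complex.I)).arg = ψ := by
  have := abs_lt.1 hψ
  have hpi := Real.pi_pos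
  rw [Complex.exp_mul_I]
  exact Complex.arg_mul_cos_add_sin_mul_I hr ⟨by linarith, by linarith⟩

lemma norm_ray (ψ : ℝ) {r : ℝ} (hr : 0 ≤ r) : ‖(r : ℂ) * Complex.exp (ψ * Complex.I)‖ = r := by
  rw [norm_mul, Complex.norm_exp_ofReal_mul_I, mul_one, Complex.norm_real, Real.norm_of_nonneg hr]

/-- The sector between the rays in directions `θ` and `-θ` is convex. -/
lemma abs_arg_conj_combination_le {θ : ℝ} (hθ : |θ| < Real.pi / 2) {p q : ℝ} (hp : 0 < p)
    (hq : 0 ≤ q) :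
    (p + q) * Real.cos θ ≤
      ‖(p : ℂ) * Complex.exp (θ * Complex.I) + q * Complex.exp ((-θ : ℝ) * Complex.I)‖ ∧
    |((p : ℂ) * Complex.exp (θ * Complex.I) + q * Complex.exp ((-θ : ℝ) * Complex.I)).arg|
      ≤ |θ| := by
  set z := (p : ℂ) * Complex.exp (θ * Complex.I) + q * Complex.exp ((-θ : ℝ) * Complex.I) with hz
  have hcos : 0 < Real.cos θ := Real.cos_pos_of_mem_Ioo (abs_lt.1 hθ)
  have hre : z.re = (p + q) * Real.cos θ := by
    rw [hz, Complex.add_re, Complex.re_ofReal_mul, Complex.re_ofReal_mul,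
      Complex.exp_ofReal_mul_I_re, Complex.exp_ofReal_mul_I_re, Real.cos_neg]
    ring
  have hle : z.re ≤ ‖z‖ := Complex.re_le_norm z
  have hpos : 0 < ‖z‖ := by
    have : 0 < (p + q) * Real.cos θ := by positivity
    linarith
  have hup : ‖z‖ ≤ p + q := by
    refine (norm_add_le _ _).trans ?_
    rw [norm_ray _ hp.le, norm_ray _ hq]
  refine ⟨hre ▸ hle, ?_⟩
  by_contra! hlt
  have h1 := Real.cos_lt_cos_of_nonneg_of_le_pi (abs_nonneg θ) (Complex.abs_arg_le_pi z) hlt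
  rw [Real.cos_abs, Real.cos_abs, Complex.cos_arg (norm_pos_iff.1 hpos), hre,
    div_lt_iff₀ hpos] at h1
  nlinarith

/-- Beyond some radius the modes are separated along the rays `0` and `θ` and along the segments
joining them. -/
lemma exists_raySeparated {d : ℕ} (hd : 2 ≤ d) {Q : ℂ → ℂ}
    (hQ : Tendsto (fun z => Q z / z ^ d) (cocompact ℂ) (𝓝 1)) {θ : ℝ}
    (hθ : |θ| < Real.pi / (d + 2)) :
    ∃ R : ℝ, 0 < R ∧ RaySeparated d Q θ R ∧ RaySeparated d Q 0 R ∧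
      ∀ r : ℝ, R ≤ r → ∀ t : ℝ, 0 ≤ t →
        ModesSeparated d Q (r * Complex.exp (θ * Complex.I) + t * Complex.exp ((-θ : ℝ) * Complex.I))
          (Complex.exp ((-θ : ℝ) * Complex.I)) := by
  have hθ2 := abs_lt_pi_div_two hd hθ
  have hcos : 0 < Real.cos θ := Real.cos_pos_of_mem_Ioo (abs_lt.1 hθ2)
  obtain ⟨R, hR, h⟩ := exists_modesSeparated hd hQ hθ
  have hpi := Real.pi_pos
  have hRR : R ≤ R / Real.cos θ := by
    rw [le_div_iff₀ hcos]
    nlinarith [Real.cos_le_one θ]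
  refine ⟨R / Real.cos θ, by positivity, fun r hr => ?_, fun r hr => ?_, fun r hr t ht => ?_⟩
  · have hr0 : 0 < r := by linarith
    refine h _ ?_ ?_ θ le_rfl
    · rw [norm_ray _ hr0.le]; linarith
    · rw [arg_ray hθ2 hr0]
  · have hr0 : 0 < r := by linarith
    refine h _ ?_ ?_ 0 (by simp)
    · rw [norm_ray _ hr0.le]; linarith
    · rw [arg_ray (by simpa using hpi) hr0]; simp
  · have hr0 : 0 < r := by linarith
    obtain ⟨h1, h2⟩ := abs_arg_conj_combination_le hθ2 hr0 ht
    refine h _ (le_trans ?_ h1) h2 (-θ) (by simp)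
    rw [div_le_iff₀ hcos] at hr
    nlinarith

/-- A solution which is recessive on the positive real axis is recessive in the whole sector. -/
lemma RecessiveAlong.of_zero {d : ℕ} (hd : 2 ≤ d) {Q u : ℂ → ℂ}
    (hQ : Tendsto (fun z => Q z / z ^ d) (cocompact ℂ) (𝓝 1)) (hu : IsEntireSol Q u) {θ : ℝ}
    (hθ : |θ| < Real.pi / (d + 2)) (h0 : RecessiveAlong d u 0) : RecessiveAlong d u θ := by
  have hθ2 := abs_lt_pi_div_two hd hθ
  have hcos : 0 < Real.cos θ := Real.cos_pos_of_mem_Ioo (abs_lt.1 hθ2)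
  obtain ⟨R, hR, -, hsep0, hseg⟩ := exists_raySeparated hd hQ hθ
  filter_upwards [eventually_ge_atTop R, eventually_ge_atTop (R / (2 * Real.cos θ))] with r h1 h2
  have hr0 : 0 < r := by linarith
  have hmono := dominance_le_dominance hu (Complex.norm_exp_ofReal_mul_I (-θ)) hr0.le
    fun t ht => hseg r h1 t ht.1
  have hend : (r : ℂ) * Complex.exp (θ * Complex.I) + r * Complex.exp ((-θ : ℝ) * Complex.I)
      = ((r * (2 * Real.cos θ) : ℝ) : ℂ) * Complex.exp ((0 : ℝ) * Complex.I) := by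
    push_cast
    rw [zero_mul, Complex.exp_zero, Complex.cos, neg_mul]
    ring
  rw [hend, Complex.ofReal_zero, zero_mul, add_zero] at hmono
  rw [div_le_iff₀ (by positivity)] at h2
  exact hmono.trans (hsep0.nonpos_of_recessive hu h0 h2)

lemma IsEntireSol.sub_const_mul {Q u v : ℂ → ℂ} (hu : IsEntireSol Q u) (hv : IsEntireSol Q v)
    (w : ℂ) : IsEntireSol Q (fun z => u z - w * v z) ∧
      deriv (fun z => u z - w * v z) = fun z => deriv u z - w * deriv v z := by
  have hd : deriv (fun z => u z - w * v z) = fun z => deriv u z - w * deriv v z := by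
    ext z
    rw [deriv_fun_sub (hu.1 z) ((hv.1 z).const_mul w), deriv_const_mul _ (hv.1 z)]
  refine ⟨⟨hu.1.sub (hv.1.const_mul w), fun z => ?_⟩, hd⟩
  rw [hd, deriv_fun_sub (hu.differentiable_deriv z) ((hv.differentiable_deriv z).const_mul w),
    deriv_const_mul _ (hv.differentiable_deriv z), hu.2, hv.2]
  ring

/-- Given a solution which is dominant along a ray, every other solution differs from a multiple
of it by a recessive solution. -/
lemma RaySeparated.exists_recessive {d : ℕ} {Q u v : ℂ → ℂ} (hu : IsEntireSol Q u)
    (hv : IsEntireSol Q v) {θ R : ℝ} (h : RaySeparated d Q θ R) (hrv : ¬ RecessiveAlong d v θ) :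
    ∃ w : ℂ, RecessiveAlong d (fun z => u z - w * v z) θ := by
  have hdom : ∀ᶠ r : ℝ in atTop, 0 < dominance d (1 / 4) v (r * Complex.exp (θ * Complex.I)) := by
    obtain ⟨r, h1, h2⟩ := ((not_eventually.1 hrv).and_eventually (eventually_ge_atTop R)).exists
    filter_upwards [eventually_ge_atTop r] with r' hr'
    exact (not_le.1 h1).trans_le (h.dominance_mono hv h2 hr')
  obtain ⟨r₀, hr₀⟩ := eventually_atTop.1 (hdom.and (eventually_ge_atTop R))
  have hg : ∀ w z, growPart d (fun z => u z - w * v z) z = growPart d u z - w * growPart d v z := by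
    intro w z
    rw [growPart, (hu.sub_const_mul hv w).2, growPart, growPart]; ring
  have hdp : ∀ w z, decayPart d (fun z => u z - w * v z) z
      = decayPart d u z - w * decayPart d v z := by
    intro w z
    rw [decayPart, (hu.sub_const_mul hv w).2, decayPart, decayPart]; ring
  let F : ℕ → Set ℂ := fun k => {w | dominance d (1 / 4) (fun z => u z - w * v z)
    ((r₀ + k : ℝ) * Complex.exp (θ * Complex.I)) ≤ 0}
  have hclosed : ∀ k, IsClosed (F k) := by
    intro k
    simp only [F, dominance, hg, hdp]
    exact isClosed_le (by fun_prop) continuous_const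
  have hbdd : Bornology.IsBounded (F 0) := by
    obtain ⟨hpos, -⟩ := hr₀ r₀ le_rfl
    simp only [F, Nat.cast_zero, add_zero, dominance, hg, hdp] at hpos ⊢
    set z := (r₀ : ℂ) * Complex.exp (θ * Complex.I)
    have hlt : ‖decayPart d v z‖ / 2 < ‖growPart d v z‖ :=
      lt_of_pow_lt_pow_left₀ 2 (norm_nonneg _) (by nlinarith)
    rw [isBounded_iff_forall_norm_le]
    refine ⟨(‖growPart d u z‖ + ‖decayPart d u z‖ / 2) /
      (‖growPart d v z‖ - ‖decayPart d v z‖ / 2), fun w hw => ?_⟩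
    rw [le_div_iff₀ (by linarith)]
    have h1 : ‖growPart d u z - w * growPart d v z‖ ≤ ‖decayPart d u z - w * decayPart d v z‖ / 2 := by
      refine le_of_sq_le_sq ?_ (by positivity)
      have := Set.mem_ofPred_eq ▸ hw
      nlinarith
    have h2 := norm_sub_le (decayPart d u z) (w * decayPart d v z)
    have h3 := norm_sub_norm_le (w * growPart d v z) (growPart d u z)
    rw [norm_sub_rev] at h3
    rw [norm_mul] at h2 h3
    nlinarith
  have hmono : ∀ k, F (k + 1) ⊆ F k := by
    intro k w hw
    refine le_trans (h.dominance_mono (hu.sub_const_mul hv w).1 ?_ ?_) hw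
    · have := (hr₀ r₀ le_rfl).2
      have : (0 : ℝ) ≤ k := k.cast_nonneg
      linarith
    · push_cast; linarith
  have hne : ∀ k, (F k).Nonempty := by
    intro k
    obtain ⟨hpos, -⟩ := hr₀ (r₀ + k) (by simp)
    simp only [F, dominance, hg, hdp] at hpos ⊢
    set z := ((r₀ + k : ℝ) : ℂ) * Complex.exp (θ * Complex.I)
    have hA : growPart d v z ≠ 0 := by
      intro h0
      rw [h0, norm_zero] at hpos
      nlinarith [sq_nonneg ‖decayPart d v z‖]
    refine ⟨growPart d u z / growPart d v z, ?_⟩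
    rw [Set.mem_ofPred_eq, div_mul_cancel₀ _ hA, sub_self, norm_zero]
    nlinarith [sq_nonneg ‖decayPart d u z - growPart d u z / growPart d v z * decayPart d v z‖]
  obtain ⟨w, hw⟩ := IsCompact.nonempty_iInter_of_sequence_nonempty_isCompact_isClosed F hmono hne
    (Metric.isCompact_of_isClosed_isBounded (hclosed 0) hbdd) hclosed
  refine ⟨w, ?_⟩
  filter_upwards [eventually_ge_atTop r₀] with r hr
  obtain ⟨k, hk⟩ := exists_nat_ge (r - r₀)
  exact (h.dominance_mono (hu.sub_const_mul hv w).1 (hr₀ r hr).2 (by linarith)).trans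
    (Set.mem_iInter.1 hw k)

/-- The quotient of two independent solutions has an asymptotic value in the sector around the
positive real axis. -/
theorem exists_asymptotic_value {d : ℕ} (hd : 2 ≤ d) {Q u v : ℂ → ℂ}
    (hQ : Tendsto (fun z => Q z / z ^ d) (cocompact ℂ) (𝓝 1))
    (hu : IsEntireSol Q u) (hv : IsEntireSol Q v) (hW : wronsk u v 0 ≠ 0) :
    (∃ w : ℂ, ∀ θ : ℝ, |θ| < Real.pi / (d + 2) →
      Tendsto (fun r : ℝ => u (r * Complex.exp (θ * Complex.I)) /
        v (r * Complex.exp (θ * Complex.I))) atTop (𝓝 w)) ∨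
    (∀ θ : ℝ, |θ| < Real.pi / (d + 2) →
      Tendsto (fun r : ℝ => ‖u (r * Complex.exp (θ * Complex.I)) /
        v (r * Complex.exp (θ * Complex.I))‖) atTop atTop) := by
  by_cases hrv : RecessiveAlong d v 0
  · right
    intro θ hθ
    obtain ⟨R, -, hsep, -⟩ := exists_raySeparated hd hQ hθ
    have hrv' := hrv.of_zero hd hQ hv hθ
    have hW' : wronsk v u 0 ≠ 0 := by
      intro h0
      apply hW
      unfold wronsk at h0 ⊢
      linear_combination -h0
    have hru := hsep.not_recessive hv hu hW' hrv'
    obtain ⟨hne, hlim⟩ := hsep.tendsto_div hv hu hrv' hru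
    have hlim' : Tendsto (fun r : ℝ => v (r * Complex.exp (θ * Complex.I)) /
        u (r * Complex.exp (θ * Complex.I))) atTop (𝓝[≠] 0) := tendsto_nhdsWithin_iff.2 ⟨hlim, by
      filter_upwards [hne, eventually_ge_atTop R] with r h1 h2
      exact div_ne_zero (hsep.ne_zero hv hu hW' hrv' h2) h1⟩
    refine (tendsto_norm_inv_nhdsNE_zero_atTop.comp hlim').congr fun r => ?_
    simp only [Function.comp_apply, inv_div]
  · left
    have hpos : |(0 : ℝ)| < Real.pi / (d + 2) := by
      rw [abs_zero]
      have := Real.pi_pos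
      positivity
    obtain ⟨R₀, -, hsep₀, -⟩ := exists_raySeparated hd hQ hpos
    obtain ⟨w, hw⟩ := hsep₀.exists_recessive hu hv hrv
    refine ⟨w, fun θ hθ => ?_⟩
    obtain ⟨R, -, hsep, -⟩ := exists_raySeparated hd hQ hθ
    obtain ⟨hsol, hder⟩ := hu.sub_const_mul hv w
    have hw' := hw.of_zero hd hQ hsol hθ
    have hW' : wronsk (fun z => u z - w * v z) v 0 ≠ 0 := by
      intro h0
      apply hW
      rw [wronsk, hder] at h0
      rw [wronsk]
      linear_combination h0
    obtain ⟨hne, hlim⟩ := hsep.tendsto_div hsol hv hw' (hsep.not_recessive hsol hv hW' hw')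
    have := hlim.const_add w
    rw [add_zero] at this
    refine this.congr' ?_
    filter_upwards [hne] with r hr
    field_simp
    ring

/-- The Wronskian of linearly independent solutions vanishes nowhere. -/
lemma wronsk_ne_zero {Q u v : ℂ → ℂ} (hu : IsEntireSol Q u) (hv : IsEntireSol Q v)
    (hind : LinearIndependent ℂ ![u, v]) (z : ℂ) : wronsk u v z ≠ 0 := by
  intro hz
  have hW : ∀ x, wronsk u v x = 0 := fun x => (wronsk_const hu hv x z).trans hz
  rw [LinearIndependent.pair_iff] at hind
  obtain ⟨z₀, hz₀⟩ : ∃ z₀, v z₀ ≠ 0 := by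
    by_contra! h0
    have := (hind 0 1 (by ext x; simp [h0])).2
    exact one_ne_zero this
  obtain ⟨ε, hε, hball⟩ := Metric.eventually_nhds_iff_ball.1
    ((hv.1 z₀).continuousAt.eventually_ne hz₀)
  have hderiv : ∀ x ∈ Metric.ball z₀ ε, HasDerivAt (fun x => u x / v x) 0 x := by
    intro x hx
    refine ((hu.1 x).hasDerivAt.div (hv.1 x).hasDerivAt (hball x hx)).congr_deriv ?_
    have := hW x
    rw [wronsk] at this
    rw [div_eq_zero_iff]
    left
    linear_combination -this
  have hconst : ∀ x ∈ Metric.ball z₀ ε, u x / v x = u z₀ / v z₀ := fun x hx =>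
    Metric.isOpen_ball.is_const_of_deriv_eq_zero (convex_ball z₀ ε).isPreconnected
      (fun x hx => (hderiv x hx).differentiableAt.differentiableWithinAt)
      (fun x hx => (hderiv x hx).deriv) hx (Metric.mem_ball_self hε)
  have hloc : u =ᶠ[𝓝 z₀] fun x => u z₀ / v z₀ * v x := by
    filter_upwards [Metric.ball_mem_nhds z₀ hε] with x hx
    rw [← hconst x hx, div_mul_cancel₀ _ (hball x hx)]
  have hglob : u = fun x => u z₀ / v z₀ * v x :=
    AnalyticOnNhd.eq_of_eventuallyEq (fun x _ => hu.1.analyticAt x)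
      (fun x _ => (hv.1.const_mul _).analyticAt x) hloc
  have := (hind 1 (-(u z₀ / v z₀)) (by
    ext x
    have := congrFun hglob x
    simp only [Pi.add_apply, Pi.smul_apply, smul_eq_mul, Pi.zero_apply]
    linear_combination this)).1
  exact one_ne_zero this

lemma tendsto_pol_sub_div_pow (d : ℕ) (hd : 2 ≤ d) (α : Fin (d - 1) → ℂ) (lam : ℂ) :
    Tendsto (fun z => (Pol d α z - lam) / z ^ d) (cocompact ℂ) (𝓝 1) := by
  have hinv : Tendsto (fun z : ℂ => z⁻¹) (cocompact ℂ) (𝓝 0) := by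
    simpa [← Metric.cobounded_eq_cocompact] using Filter.tendsto_inv₀_cobounded (α := ℂ)
  have hpow : ∀ m : ℕ, m ≠ 0 → Tendsto (fun z : ℂ => z⁻¹ ^ m) (cocompact ℂ) (𝓝 0) := by
    intro m hm
    simpa [hm] using hinv.pow m
  have hsum : Tendsto (fun z : ℂ => 1 + ∑ i : Fin (d - 1), α i * z⁻¹ ^ (d - (i + 1))
      - lam * z⁻¹ ^ d) (cocompact ℂ) (𝓝 (1 + ∑ i : Fin (d - 1), α i * 0 - lam * 0)) := by
    refine (tendsto_const_nhds.add (tendsto_finsetSum _ fun i _ => ?_)).sub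
      ((hpow d (by omega)).const_mul lam)
    exact (hpow _ (by omega)).const_mul (α i)
  simp only [mul_zero, Finset.sum_const_zero, add_zero, sub_zero] at hsum
  refine hsum.congr' ?_
  have hne : ∀ᶠ z : ℂ in cocompact ℂ, z ≠ 0 :=
    (isCompact_singleton (x := (0 : ℂ))).compl_mem_cocompact
  filter_upwards [hne] with z hz
  rw [Pol, sub_div, add_div, div_self (pow_ne_zero d hz), Finset.sum_div, inv_pow, ← div_eq_mul_inv]
  congr 2
  refine Finset.sum_congr rfl fun i _ => ?_
  have : z ^ d = z ^ (d - (i + 1 : ℕ)) * z ^ ((i : ℕ) + 1) := by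
    rw [← pow_add]; congr 1; omega
  rw [this, inv_pow]
  field_simp

/-- A linear change of variable turns a solution into a solution of the rescaled equation. -/
lemma IsEntireSol.comp_mul {Q u : ℂ → ℂ} (hu : IsEntireSol Q u) (ω : ℂ) :
    IsEntireSol (fun z => ω ^ 2 * Q (ω * z)) (fun z => u (ω * z)) ∧
      deriv (fun z => u (ω * z)) = fun z => ω * deriv u (ω * z) := by
  have hd : deriv (fun z => u (ω * z)) = fun z => ω * deriv u (ω * z) := by
    ext z
    simpa using deriv_comp_mul_left ω u z
  refine ⟨⟨hu.1.comp (differentiable_id.const_mul ω), fun z => ?_⟩, hd⟩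
  have h1 : DifferentiableAt ℂ (fun z => deriv u (ω * z)) z :=
    (hu.differentiable_deriv.comp (differentiable_id.const_mul ω)) z
  rw [hd, deriv_const_mul _ h1, deriv_comp_mul_left ω (deriv u) z, hu.2, smul_eq_mul]
  ring

theorem stmt14 (d : ℕ) (hd : 2 ≤ d) (n : ℕ) (hn : n = d + 2)
    (α : Fin (d - 1) → ℂ) (lam : ℂ)
    (y y₁ : ℂ → ℂ) (hy : IsSol d α lam y) (hy₁ : IsSol d α lam y₁)
    (hind : LinearIndependent ℂ ![y, y₁])
    (f : ℂ → ℂ) (hf : f = fun z => y z / y₁ z)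
    (j : ℕ) (hj : j < n) :
    (∃ w : ℂ, ∀ θ : ℝ, DirIn n j θ →
        Tendsto (fun r : ℝ => f ((r : ℂ) * Complex.exp (θ * Complex.I))) atTop (𝓝 w)) ∨
    (∀ θ : ℝ, DirIn n j θ →
        Tendsto (fun r : ℝ => ‖f ((r : ℂ) * Complex.exp (θ * Complex.I))‖) atTop atTop) := by
  have hn0 : (n : ℂ) ≠ 0 := by exact_mod_cast (by omega : n ≠ 0)
  set φ : ℝ := 2 * Real.pi * j / n with hφ
  set ω : ℂ := Complex.exp (φ * Complex.I) with hω
  have hω0 : ω ≠ 0 := Complex.exp_ne_zero _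
  have hωn : ω ^ n = 1 := by
    rw [hω, ← Complex.exp_nat_mul, Complex.exp_eq_one_iff]
    refine ⟨j, ?_⟩
    rw [hφ]
    push_cast
    field_simp
  obtain ⟨hu, hdu⟩ := IsEntireSol.comp_mul (Q := fun z => Pol d α z - lam) hy ω
  obtain ⟨hv, hdv⟩ := IsEntireSol.comp_mul (Q := fun z => Pol d α z - lam) hy₁ ω
  have hW : wronsk (fun z => y (ω * z)) (fun z => y₁ (ω * z)) 0 ≠ 0 := by
    have : wronsk (fun z => y (ω * z)) (fun z => y₁ (ω * z)) 0 = ω * wronsk y y₁ (ω * 0) := by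
      rw [wronsk, hdu, hdv, wronsk]
      ring
    rw [this]
    exact mul_ne_zero hω0 (wronsk_ne_zero (Q := fun z => Pol d α z - lam) hy hy₁ hind _)
  have hmul : Tendsto (fun z : ℂ => ω * z) (cocompact ℂ) (cocompact ℂ) :=
    (Homeomorph.mulLeft₀ ω hω0).isClosedEmbedding.tendsto_cocompact
  have hQ : Tendsto (fun z => ω ^ 2 * (Pol d α (ω * z) - lam) / z ^ d) (cocompact ℂ) (𝓝 1) := by
    refine ((tendsto_pol_sub_div_pow d hd α lam).comp hmul).congr fun z => ?_
    simp only [Function.comp_apply]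
    rw [mul_pow, ← mul_div_mul_left _ (ω ^ d * z ^ d) (pow_ne_zero 2 hω0), ← mul_assoc, ← pow_add,
      add_comm 2 d, ← hn, hωn, one_mul]
  have key := exists_asymptotic_value hd hQ hu hv hW
  have hrot : ∀ (θ r : ℝ), ω * ((r : ℂ) * Complex.exp ((θ - φ : ℝ) * Complex.I))
      = r * Complex.exp (θ * Complex.I) := by
    intro θ r
    rw [hω, mul_left_comm, ← Complex.exp_add]
    congr 2
    push_cast
    ring
  have hdir : ∀ θ, DirIn n j θ → |θ - φ| < Real.pi / (d + 2) := by
    intro θ h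
    rw [DirIn] at h
    have hnd : (d + 2 : ℝ) = n := by rw [hn]; push_cast; rfl
    rwa [hnd]
  subst hf
  refine key.imp (fun ⟨w, h⟩ => ⟨w, fun θ hθ => ?_⟩) fun h θ hθ => ?_
  · simpa only [hrot] using h (θ - φ) (hdir θ hθ)
  · simpa only [hrot] using h (θ - φ) (hdir θ hθ)
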